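/- arXiv:1912.03297 — 2 statements merged into one kernel-verified Lean document; each statement's English description precedes it below -/
import Mathlib

section
/- For all functions u, v on the network 𝒢 that are edgewise of class C⁴, the Lagrange identity ∫_𝒢 ( u⁗(x) conj(v(x)) − u(x) conj(v⁗(x)) ) dx = (Γ°u, Γ∘v)_{ℂ^{4E}} − (Γ∘u, Γ°v)_{ℂ^{4E}} holds. -/
/- STATEMENT 1: Lagrange identity for the fourth derivative on a network. -/

noncomputable section

open intervalIntegral

/-- The inner product `(x,y) = ∑ i, x i * conj (y i)` on `ℂ^{4E}`. -/
def ip {ι : Type*} [Fintype ι] (x y : ι → ℂ) : ℂ :=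
  ∑ i, x i * (starRingEnd ℂ) (y i)

/-- The integral over the network: `∫_𝒢 f dx = ∑ e, ∫_0^{ℓ e} f e x dx`. -/
def netInt {E : Type*} [Fintype E] (ℓ : E → ℝ) (f : E → ℝ → ℂ) : ℂ :=
  ∑ e, ∫ x in (0:ℝ)..(ℓ e), f e x

/-- The trace vector `Γ∘u = ((u_e(0))_e, (u_e(ℓ_e))_e, (−u_e′(0))_e, (u_e′(ℓ_e))_e) ∈ ℂ^{4E}`. -/
def Γlow {E : Type*} (ℓ : E → ℝ) (u : E → ℝ → ℂ) : Fin 4 × E → ℂ :=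
  fun p => ![u p.2 0, u p.2 (ℓ p.2), -(deriv (u p.2) 0), deriv (u p.2) (ℓ p.2)] p.1

/-- The trace vector `Γ°u = ((−u_e‴(0))_e, (u_e‴(ℓ_e))_e, (−u_e″(0))_e, (−u_e″(ℓ_e))_e) ∈ ℂ^{4E}`. -/
def Γhigh {E : Type*} (ℓ : E → ℝ) (u : E → ℝ → ℂ) : Fin 4 × E → ℂ :=
  fun p => ![-(iteratedDeriv 3 (u p.2) 0), iteratedDeriv 3 (u p.2) (ℓ p.2),
      -(iteratedDeriv 2 (u p.2) 0), -(iteratedDeriv 2 (u p.2) (ℓ p.2))] p.1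

/-!
For a bilinear map `B`, the derivative of `B (f⁽ⁱ⁾, g⁽ʲ⁾)` is
`B (f⁽ⁱ⁺¹⁾, g⁽ʲ⁾) + B (f⁽ⁱ⁾, g⁽ʲ⁺¹⁾)`. In the alternating sum over `i + j = n - 1` the mixed terms
telescope, leaving `B (f⁽ⁿ⁾, g) - (-1)ⁿ B (f, g⁽ⁿ⁾)`, and integrating over an interval gives Green's
formula of order `n`. For `n = 4` and `B (z, w) = z * conj w`, regarded as an `ℝ`-bilinear map, the
boundary terms on each edge are exactly those paired by the trace vectors.
-/

section GreenFormula

variable {𝕜 E F G : Type*} [NontriviallyNormedField 𝕜]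
  [NormedAddCommGroup E] [NormedSpace 𝕜 E] [NormedAddCommGroup F] [NormedSpace 𝕜 F]
  [NormedAddCommGroup G] [NormedSpace 𝕜 G]

theorem continuousAt_iteratedDeriv_of_contDiffAt {f : 𝕜 → E} {x : 𝕜} {n : WithTop ℕ∞} {k : ℕ}
    (hf : ContDiffAt 𝕜 n f x) (hk : k ≤ n) : ContinuousAt (iteratedDeriv k f) x :=
  (hf.continuousAt_iteratedFDeriv hk).eval_const (fun _ ↦ 1)

theorem hasDerivAt_iteratedDeriv_of_contDiffAt {f : 𝕜 → E} {x : 𝕜} {n : WithTop ℕ∞} {k : ℕ}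
    (hf : ContDiffAt 𝕜 n f x) (hk : k < n) :
    HasDerivAt (iteratedDeriv k f) (iteratedDeriv (k + 1) f x) x := by
  rw [iteratedDeriv_succ]
  exact ((hf.differentiableAt_iteratedFDeriv hk).continuousMultilinear_apply_const
    (fun _ ↦ 1)).hasDerivAt

/-- The bilinear concomitant of order `n` of `f` and `g`, whose increments are the boundary terms
of Green's formula for the `n`-th derivative. The subtraction `n - 1 - k` is never truncated, as
`k` ranges below `n`. -/
def bilinearConcomitant (B : E →L[𝕜] F →L[𝕜] G) (n : ℕ) (f : 𝕜 → E) (g : 𝕜 → F) (x : 𝕜) : G :=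
  ∑ k ∈ Finset.range n, (-1 : 𝕜) ^ k • B (iteratedDeriv (n - 1 - k) f x) (iteratedDeriv k g x)

theorem bilinearConcomitant_four (B : E →L[𝕜] F →L[𝕜] G) (f : 𝕜 → E) (g : 𝕜 → F) (x : 𝕜) :
    bilinearConcomitant B 4 f g x =
      B (iteratedDeriv 3 f x) (g x) - B (iteratedDeriv 2 f x) (deriv g x) +
        B (deriv f x) (iteratedDeriv 2 g x) - B (f x) (iteratedDeriv 3 g x) := by
  simp only [bilinearConcomitant, Finset.sum_range_succ, Finset.sum_range_zero, Nat.reduceSub,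
    iteratedDeriv_zero, iteratedDeriv_one]
  module

theorem hasDerivAt_bilinearConcomitant (B : E →L[𝕜] F →L[𝕜] G) {n : ℕ} {f : 𝕜 → E} {g : 𝕜 → F}
    {x : 𝕜} (hf : ContDiffAt 𝕜 n f x) (hg : ContDiffAt 𝕜 n g x) :
    HasDerivAt (bilinearConcomitant B n f g)
      (B (iteratedDeriv n f x) (g x) - (-1 : 𝕜) ^ n • B (f x) (iteratedDeriv n g x)) x := by
  let T (k : ℕ) : G := (-1 : 𝕜) ^ k • B (iteratedDeriv (n - k) f x) (iteratedDeriv k g x)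
  have hterm : ∀ k ∈ Finset.range n, HasDerivAt
      (fun y ↦ (-1 : 𝕜) ^ k • B (iteratedDeriv (n - 1 - k) f y) (iteratedDeriv k g y))
      (T k - T (k + 1)) x := by
    intro k hk
    have hkn : k < n := Finset.mem_range.mp hk
    have hf' := hasDerivAt_iteratedDeriv_of_contDiffAt (k := n - 1 - k) hf
      (by exact_mod_cast (by lia : n - 1 - k < n))
    have hg' := hasDerivAt_iteratedDeriv_of_contDiffAt (k := k) hg (by exact_mod_cast hkn)
    rw [show n - 1 - k + 1 = n - k by lia] at hf'
    refine ((B.hasDerivAt_of_bilinear (fun _ ↦ hf') (fun _ ↦ hg')).const_smul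
      ((-1 : 𝕜) ^ k)).congr_deriv ?_
    simp only [T, show n - (k + 1) = n - 1 - k by lia, pow_succ]
    module
  have hsum : ∑ k ∈ Finset.range n, (T k - T (k + 1)) =
      B (iteratedDeriv n f x) (g x) - (-1 : 𝕜) ^ n • B (f x) (iteratedDeriv n g x) := by
    rw [Finset.sum_range_sub']
    simp [T]
  exact hsum ▸ HasDerivAt.fun_sum hterm

end GreenFormula

theorem integral_bilinear_iteratedDeriv_sub {E F G : Type*}
    [NormedAddCommGroup E] [NormedSpace ℝ E] [NormedAddCommGroup F] [NormedSpace ℝ F]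
    [NormedAddCommGroup G] [NormedSpace ℝ G] [CompleteSpace G] (B : E →L[ℝ] F →L[ℝ] G)
    {n : ℕ} {f : ℝ → E} {g : ℝ → F} {a b : ℝ}
    (hf : ∀ x ∈ Set.uIcc a b, ContDiffAt ℝ n f x) (hg : ∀ x ∈ Set.uIcc a b, ContDiffAt ℝ n g x) :
    ∫ x in a..b, (B (iteratedDeriv n f x) (g x) - (-1 : ℝ) ^ n • B (f x) (iteratedDeriv n g x)) =
      bilinearConcomitant B n f g b - bilinearConcomitant B n f g a := by
  refine integral_eq_sub_of_hasDerivAt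
    (fun x hx ↦ hasDerivAt_bilinearConcomitant B (hf x hx) (hg x hx))
    (ContinuousOn.intervalIntegrable fun x hx ↦ ContinuousAt.continuousWithinAt ?_)
  have hfn := continuousAt_iteratedDeriv_of_contDiffAt (hf x hx) le_rfl
  have hgn := continuousAt_iteratedDeriv_of_contDiffAt (hg x hx) le_rfl
  have hf₀ := (hf x hx).continuousAt
  have hg₀ := (hg x hx).continuousAt
  fun_prop

/-- The sesquilinear product `(z, w) ↦ z * conj w` as an `ℝ`-bilinear map, to which
the product rule for functions of a real variable applies. -/
def mulConj : ℂ →L[ℝ] ℂ →L[ℝ] ℂ :=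
  (ContinuousLinearMap.mul ℝ ℂ).bilinearComp (.id ℝ ℂ) (Complex.conjCLE : ℂ →L[ℝ] ℂ)

@[simp]
theorem mulConj_apply (z w : ℂ) : mulConj z w = z * (starRingEnd ℂ) w :=
  rfl

theorem ip_Γhigh_Γlow_sub_ip_Γlow_Γhigh {E : Type*} [Fintype E] (ℓ : E → ℝ) (u v : E → ℝ → ℂ) :
    ip (Γhigh ℓ u) (Γlow ℓ v) - ip (Γlow ℓ u) (Γhigh ℓ v) =
      ∑ e, (bilinearConcomitant mulConj 4 (u e) (v e) (ℓ e) -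
        bilinearConcomitant mulConj 4 (u e) (v e) 0) := by
  simp only [ip, Fintype.sum_prod_type_right, ← Finset.sum_sub_distrib]
  refine Finset.sum_congr rfl fun e _ ↦ ?_
  simp only [Γlow, Γhigh, bilinearConcomitant_four, mulConj_apply, Fin.sum_univ_four,
    Matrix.cons_val, map_neg]
  ring

theorem fourth_order_lagrange_identity_general {E : Type*} [Fintype E] (ℓ : E → ℝ)
    (u v : E → ℝ → ℂ) (hu : ∀ e, ∀ x ∈ Set.uIcc 0 (ℓ e), ContDiffAt ℝ 4 (u e) x)
    (hv : ∀ e, ∀ x ∈ Set.uIcc 0 (ℓ e), ContDiffAt ℝ 4 (v e) x) :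
    netInt ℓ (fun e x => iteratedDeriv 4 (u e) x * (starRingEnd ℂ) (v e x)
        - u e x * (starRingEnd ℂ) (iteratedDeriv 4 (v e) x))
      = ip (Γhigh ℓ u) (Γlow ℓ v) - ip (Γlow ℓ u) (Γhigh ℓ v) := by
  rw [ip_Γhigh_Γlow_sub_ip_Γlow_Γhigh, netInt]
  refine Finset.sum_congr rfl fun e _ ↦ ?_
  simpa [Even.neg_one_pow (show Even 4 by decide)] using
    integral_bilinear_iteratedDeriv_sub mulConj (n := 4) (hu e) (hv e)

theorem fourth_order_lagrange_identity
    {E : Type*} [Fintype E] (ℓ : E → ℝ) (hℓ : ∀ e, 0 < ℓ e)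
    (u v : E → ℝ → ℂ)
    (hu : ∀ e, ContDiff ℝ 4 (u e)) (hv : ∀ e, ContDiff ℝ 4 (v e)) :
    netInt ℓ (fun e x => iteratedDeriv 4 (u e) x * (starRingEnd ℂ) (v e x)
        - u e x * (starRingEnd ℂ) (iteratedDeriv 4 (v e) x))
      = ip (Γhigh ℓ u) (Γlow ℓ v) - ip (Γlow ℓ u) (Γhigh ℓ v) :=
  fourth_order_lagrange_identity_general ℓ u v
    (fun e _ _ ↦ (hu e).contDiffAt) (fun e _ _ ↦ (hv e).contDiffAt)
end
end

section
/- Let j ≥ 1 be an integer and ℓ > 0. There exist constants c̃₁, c̃₂ > 0 (depending only on j and ℓ) such that for every u ∈ C^{j}([0,ℓ],ℂ) and every integer 0 ≤ h ≤ j − 1: |u^{(h)}(0)| + |u^{(h)}(ℓ)| ≤ c̃₁ ( ∫_0^ℓ |u|² dx )^{1/2} + c̃₂ ( ∫_0^ℓ |u^{(j)}|² dx )^{1/2}. -/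
/- STATEMENT 12: Trace estimate on a bounded interval: all boundary derivative values of
   order `h ≤ j − 1` are bounded by the `L²` norms of `u` and of `u^{(j)}`. -/

noncomputable section

open intervalIntegral

open MeasureTheory Set
open scoped ContDiff ENNReal Interval Topology

/-!
Choose a smooth function `φ` which near the endpoint `a` is the monomial `(x - a) ^ m / m!` and
which vanishes near the other endpoint. All derivatives of `φ` at the two endpoints are zero, except
that the `m`-th one equals `1` at `a`. Integrating `∫ φ • u⁽ʲ⁾` by parts `j` times therefore leaves
a single boundary term, which for `m = j - 1 - h` is `± u⁽ʰ⁾(a)`, and the integral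
`± ∫ φ⁽ʲ⁾ • u`. Hölder's inequality bounds both integrals.
-/

section IteratedDerivWithin

variable {𝕜 F : Type*} [NontriviallyNormedField 𝕜] [NormedAddCommGroup F] [NormedSpace 𝕜 F]
  {f : 𝕜 → F} {s : Set 𝕜} {x : 𝕜} {n : ℕ∞ω} {k : ℕ}

theorem iteratedDerivWithin_eq_iteratedDeriv_of_contDiff (hf : ContDiff 𝕜 n f) (hk : k ≤ n)
    (hs : UniqueDiffOn 𝕜 s) (hx : x ∈ s) : iteratedDerivWithin k f s x = iteratedDeriv k f x :=
  iteratedDerivWithin_eq_iteratedDeriv hs (hf.of_le hk).contDiffAt hx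

theorem hasDerivWithinAt_iteratedDerivWithin (hf : ContDiffOn 𝕜 n f s) (hk : k < n)
    (hs : UniqueDiffOn 𝕜 s) (hx : x ∈ s) :
    HasDerivWithinAt (iteratedDerivWithin k f s) (iteratedDerivWithin (k + 1) f s x) s x := by
  rw [iteratedDerivWithin_succ]
  exact (hf.differentiableOn_iteratedDerivWithin hk hs x hx).hasDerivWithinAt

end IteratedDerivWithin

section LpNorm

theorem norm_integral_smul_le_lpNorm_mul_lpNorm {α 𝕜 E : Type*} {_ : MeasurableSpace α}
    {μ : Measure α} [NormedRing 𝕜] [NormedAddCommGroup E] [NormedSpace ℝ E] [Module 𝕜 E]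
    [IsBoundedSMul 𝕜 E] {p q : ℝ≥0∞} [p.HolderConjugate q] {φ : α → 𝕜} {f : α → E}
    (hφ : MemLp φ p μ) (hf : MemLp f q μ) :
    ‖∫ x, φ x • f x ∂μ‖ ≤ lpNorm φ p μ * lpNorm f q μ := by
  have hφf : AEStronglyMeasurable (φ • f) μ := hφ.1.smul hf.1
  calc ‖∫ x, φ x • f x ∂μ‖ ≤ ∫ x, ‖(φ • f) x‖ ∂μ := norm_integral_le_integral_norm _
    _ = (eLpNorm (φ • f) 1 μ).toReal := by
      rw [toReal_eLpNorm hφf, lpNorm_one_eq_integral_norm hφf]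
    _ ≤ (eLpNorm φ p μ * eLpNorm f q μ).toReal :=
      ENNReal.toReal_mono (ENNReal.mul_ne_top hφ.eLpNorm_ne_top hf.eLpNorm_ne_top)
        (eLpNorm_smul_le_mul_eLpNorm hf.1 hφ.1)
    _ = lpNorm φ p μ * lpNorm f q μ := by
      rw [ENNReal.toReal_mul, toReal_eLpNorm hφ.1, toReal_eLpNorm hf.1]

theorem memLp_restrict_of_continuousOn_isCompact {X E : Type*} [TopologicalSpace X]
    [T2Space X] [MeasurableSpace X] [OpensMeasurableSpace X]
    {μ : Measure X} [IsFiniteMeasureOnCompacts μ] [NormedAddCommGroup E] {f : X → E} {K : Set X}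
    (hf : ContinuousOn f K) (hK : IsCompact K) (p : ℝ≥0∞) : MemLp f p (μ.restrict K) := by
  obtain ⟨C, hC⟩ := hK.exists_bound_of_continuousOn hf
  have : IsFiniteMeasure (μ.restrict K) := isFiniteMeasure_restrict.mpr hK.measure_ne_top
  exact .of_bound (hf.aestronglyMeasurable_of_isCompact hK hK.measurableSet) C
    (ae_restrict_of_forall_mem hK.measurableSet hC)

theorem norm_intervalIntegral_smul_le_lpNorm_mul_lpNorm {𝕜 E : Type*} [NormedRing 𝕜]
    [NormedAddCommGroup E] [NormedSpace ℝ E] [Module 𝕜 E] [IsBoundedSMul 𝕜 E] {p q : ℝ≥0∞}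
    [p.HolderConjugate q] {a b : ℝ} {φ : ℝ → 𝕜} {f : ℝ → E}
    (hφ : ContinuousOn φ [[a, b]]) (hf : ContinuousOn f [[a, b]]) :
    ‖∫ x in a..b, φ x • f x‖ ≤
      lpNorm φ p (volume.restrict [[a, b]]) * lpNorm f q (volume.restrict [[a, b]]) := by
  rw [norm_integral_eq_norm_integral_uIoc, uIoc, ← integral_Icc_eq_integral_Ioc]
  exact norm_integral_smul_le_lpNorm_mul_lpNorm
    (memLp_restrict_of_continuousOn_isCompact hφ isCompact_uIcc p)
    (memLp_restrict_of_continuousOn_isCompact hf isCompact_uIcc q)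

theorem lpNorm_iteratedDerivWithin_Icc_eq_intervalIntegral {E : Type*} [NormedAddCommGroup E]
    [NormedSpace ℝ E] {p : ℝ≥0∞} (hp₀ : p ≠ 0) (hp : p ≠ ⊤) {a b : ℝ} (hab : a < b) {u : ℝ → E}
    {n : ℕ∞ω} {k : ℕ} (hu : ContDiff ℝ n u) (hk : k ≤ n) :
    lpNorm (iteratedDerivWithin k u (Icc a b)) p (volume.restrict (Icc a b)) =
      (∫ x in a..b, ‖iteratedDeriv k u x‖ ^ p.toReal) ^ p.toReal⁻¹ := by
  have hs := uniqueDiffOn_Icc hab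
  have hcont := hu.contDiffOn.continuousOn_iteratedDerivWithin (s := Icc a b) hk hs
  rw [lpNorm_eq_integral_norm_rpow_toReal hp₀ hp (hcont.aestronglyMeasurable measurableSet_Icc),
    integral_of_le hab.le, ← integral_Icc_eq_integral_Ioc]
  congr 1
  refine setIntegral_congr_fun measurableSet_Icc fun x hx => ?_
  simp only [iteratedDerivWithin_eq_iteratedDeriv_of_contDiff hu hk hs hx]

end LpNorm

theorem integral_smul_iteratedDerivWithin {𝕜 E : Type*} [NontriviallyNormedField 𝕜]
    [NormedAlgebra ℝ 𝕜] [NormedAddCommGroup E] [NormedSpace ℝ E] [NormedSpace 𝕜 E]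
    [IsScalarTower ℝ 𝕜 E] [CompleteSpace E] {a b : ℝ} {f : ℝ → 𝕜} {g : ℝ → E} {n k : ℕ}
    (hab : a ≠ b) (hk : k ≤ n) (hf : ContDiffOn ℝ k f [[a, b]])
    (hg : ContDiffOn ℝ n g [[a, b]]) :
    ∫ x in a..b, f x • iteratedDerivWithin n g [[a, b]] x =
      (∑ i ∈ Finset.range k, (-1 : ℝ) ^ i •
        (iteratedDerivWithin i f [[a, b]] b • iteratedDerivWithin (n - 1 - i) g [[a, b]] b -
          iteratedDerivWithin i f [[a, b]] a • iteratedDerivWithin (n - 1 - i) g [[a, b]] a)) +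
      (-1 : ℝ) ^ k •
        ∫ x in a..b, iteratedDerivWithin k f [[a, b]] x •
          iteratedDerivWithin (n - k) g [[a, b]] x := by
  have hs := uniqueDiffOn_uIcc hab
  induction k with
  | zero => simp
  | succ k ih =>
    have hk₁ : n - k = n - 1 - k + 1 := by lia
    have hk₂ : n - (k + 1) = n - 1 - k := by lia
    have hf' := hf.continuousOn_iteratedDerivWithin le_rfl hs
    have hg' := hg.continuousOn_iteratedDerivWithin (m := n - k) (mod_cast n.sub_le k) hs
    rw [ih (by lia) (hf.of_le (mod_cast k.le_succ)), Finset.sum_range_succ, hk₁,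
      integral_smul_deriv_eq_deriv_smul_of_hasDerivWithinAt
        (fun x => hasDerivWithinAt_iteratedDerivWithin hf (mod_cast k.lt_succ_self) hs)
        (fun x => hasDerivWithinAt_iteratedDerivWithin hg (mod_cast (by lia)) hs)
        hf'.intervalIntegrable (hk₁ ▸ hg').intervalIntegrable, hk₂]
    module

section TestFunction

theorem exists_contDiff_eventuallyEq_eventuallyEq_zero {X F : Type*} [NormedAddCommGroup X]
    [NormedSpace ℝ X] [HasContDiffBump X] [NormedAddCommGroup F] [NormedSpace ℝ F] {n : ℕ∞}
    {f : X → F} (hf : ContDiff ℝ n f) {a b : X} (hab : a ≠ b) :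
    ∃ g : X → F, ContDiff ℝ n g ∧ g =ᶠ[𝓝 a] f ∧ g =ᶠ[𝓝 b] 0 := by
  have hd : 0 < dist b a := dist_pos.mpr hab.symm
  let χ : ContDiffBump a := ⟨dist b a / 4, dist b a / 2, by linarith, by linarith⟩
  refine ⟨fun x => χ x • f x, χ.contDiff.smul hf, ?_, ?_⟩
  · filter_upwards [χ.eventuallyEq_one] with x hx
    simp [hx]
  · have hb : ∀ᶠ x in 𝓝 b, dist b a / 2 < dist x a :=
      (continuous_id.dist continuous_const).continuousAt.eventually_const_lt (half_lt_self hd)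
    filter_upwards [hb] with x hx
    simp [χ.zero_of_le_dist hx.le]

/-- A smooth function whose derivatives at the endpoints `a` and `b` all vanish, except for the
`m`-th derivative at `a`, which is `1`. Integration by parts against it isolates one boundary
value. -/
structure IsTraceTest (φ : ℝ → ℝ) (m : ℕ) (a b : ℝ) : Prop where
  contDiff : ContDiff ℝ ∞ φ
  iteratedDeriv_left (k : ℕ) : iteratedDeriv k φ a = if k = m then 1 else 0
  iteratedDeriv_right (k : ℕ) : iteratedDeriv k φ b = 0

theorem iteratedDeriv_sub_pow_div_factorial_self (k m : ℕ) (a : ℝ) :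
    iteratedDeriv k (fun x => (x - a) ^ m / m.factorial) a = if k = m then 1 else 0 := by
  rw [iteratedDeriv_div_const, iteratedDeriv_comp_sub_const k (fun x : ℝ => x ^ m) a]
  beta_reduce
  rw [sub_self, iteratedDeriv_fun_pow_zero]
  split_ifs with hk
  · exact div_self (mod_cast m.factorial_ne_zero)
  · simp

theorem exists_isTraceTest (m : ℕ) {a b : ℝ} (hab : a ≠ b) : ∃ φ, IsTraceTest φ m a b := by
  have hmono : ContDiff ℝ ∞ fun x : ℝ => (x - a) ^ m / m.factorial := by fun_prop
  obtain ⟨φ, hφ, hφa, hφb⟩ := exists_contDiff_eventuallyEq_eventuallyEq_zero hmono hab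
  refine ⟨φ, hφ, fun k => ?_, fun k => ?_⟩
  · rw [hφa.iteratedDeriv_eq, iteratedDeriv_sub_pow_div_factorial_self]
  · simpa using hφb.iteratedDeriv_eq k

end TestFunction

section Trace

variable {E : Type*} [NormedAddCommGroup E] [NormedSpace ℝ E] [CompleteSpace E]
  {a b : ℝ} {u : ℝ → E} {h m n : ℕ} {p : ℝ≥0∞}

theorem IsTraceTest.iteratedDerivWithin_left {φ : ℝ → ℝ} (hφ : IsTraceTest φ m a b) (hab : a ≠ b)
    (k : ℕ) : iteratedDerivWithin k φ [[a, b]] a = if k = m then 1 else 0 := by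
  rw [iteratedDerivWithin_eq_iteratedDeriv_of_contDiff hφ.contDiff (mod_cast le_top)
    (uniqueDiffOn_uIcc hab) left_mem_uIcc, hφ.iteratedDeriv_left]

theorem IsTraceTest.iteratedDerivWithin_right {φ : ℝ → ℝ} (hφ : IsTraceTest φ m a b) (hab : a ≠ b)
    (k : ℕ) : iteratedDerivWithin k φ [[a, b]] b = 0 := by
  rw [iteratedDerivWithin_eq_iteratedDeriv_of_contDiff hφ.contDiff (mod_cast le_top)
    (uniqueDiffOn_uIcc hab) right_mem_uIcc, hφ.iteratedDeriv_right]

theorem IsTraceTest.neg_one_pow_smul_iteratedDerivWithin {φ : ℝ → ℝ} (hφ : IsTraceTest φ m a b)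
    (hab : a ≠ b) (hm : m < n) (hu : ContDiffOn ℝ n u [[a, b]]) :
    (-1 : ℝ) ^ m • iteratedDerivWithin (n - 1 - m) u [[a, b]] a =
      (-1 : ℝ) ^ n • (∫ x in a..b, iteratedDerivWithin n φ [[a, b]] x • u x) -
        ∫ x in a..b, φ x • iteratedDerivWithin n u [[a, b]] x := by
  rw [integral_smul_iteratedDerivWithin hab le_rfl
    (hφ.contDiff.of_le (mod_cast le_top)).contDiffOn hu]
  simp [hφ.iteratedDerivWithin_left hab, hφ.iteratedDerivWithin_right hab, hm]

theorem exists_norm_iteratedDerivWithin_left_le_lpNorm (hab : a ≠ b) (hh : h < n) (hp : 1 ≤ p) :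
    ∃ C : ℝ, ∀ u : ℝ → E, ContDiffOn ℝ n u [[a, b]] →
      ‖iteratedDerivWithin h u [[a, b]] a‖ ≤
        C * (lpNorm u p (volume.restrict [[a, b]]) +
          lpNorm (iteratedDerivWithin n u [[a, b]]) p (volume.restrict [[a, b]])) := by
  have := ENNReal.HolderConjugate.conjExponent hp |>.symm
  have hs := uniqueDiffOn_uIcc hab
  obtain ⟨φ, hφ⟩ := exists_isTraceTest (n - 1 - h) hab
  have hφn : ContDiffOn ℝ n φ [[a, b]] := (hφ.contDiff.of_le (mod_cast le_top)).contDiffOn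
  set A := lpNorm (iteratedDerivWithin n φ [[a, b]]) p.conjExponent (volume.restrict [[a, b]])
  set B := lpNorm φ p.conjExponent (volume.restrict [[a, b]])
  refine ⟨A + B, fun u hu => ?_⟩
  set U := lpNorm u p (volume.restrict [[a, b]])
  set V := lpNorm (iteratedDerivWithin n u [[a, b]]) p (volume.restrict [[a, b]])
  have hA : 0 ≤ A := lpNorm_nonneg
  have hB : 0 ≤ B := lpNorm_nonneg
  have hU : 0 ≤ U := lpNorm_nonneg
  have hV : 0 ≤ V := lpNorm_nonneg
  have hident := hφ.neg_one_pow_smul_iteratedDerivWithin hab (by lia) hu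
  rw [show n - 1 - (n - 1 - h) = h by lia] at hident
  calc ‖iteratedDerivWithin h u [[a, b]] a‖
      = ‖(-1 : ℝ) ^ (n - 1 - h) • iteratedDerivWithin h u [[a, b]] a‖ := by simp [norm_smul]
    _ ≤ ‖∫ x in a..b, iteratedDerivWithin n φ [[a, b]] x • u x‖ +
          ‖∫ x in a..b, φ x • iteratedDerivWithin n u [[a, b]] x‖ := by
      rw [hident]
      exact (norm_sub_le _ _).trans_eq (by simp [norm_smul])
    _ ≤ A * U + B * V := add_le_add
      (norm_intervalIntegral_smul_le_lpNorm_mul_lpNorm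
        (hφn.continuousOn_iteratedDerivWithin le_rfl hs) hu.continuousOn)
      (norm_intervalIntegral_smul_le_lpNorm_mul_lpNorm
        hφn.continuousOn (hu.continuousOn_iteratedDerivWithin le_rfl hs))
    _ ≤ (A + B) * (U + V) := by nlinarith [mul_nonneg hA hV, mul_nonneg hB hU]

end Trace

theorem trace_estimate_interval_general {E : Type*} [NormedAddCommGroup E] [NormedSpace ℝ E]
    [CompleteSpace E] (j : ℕ) {a b : ℝ} (hab : a < b) {p : ℝ≥0∞} (hp : 1 ≤ p) :
    ∃ C > (0 : ℝ), ∀ u : ℝ → E, ContDiffOn ℝ j u (Icc a b) → ∀ h < j,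
      ‖iteratedDerivWithin h u (Icc a b) a‖ + ‖iteratedDerivWithin h u (Icc a b) b‖ ≤
        C * lpNorm u p (volume.restrict (Icc a b)) +
          C * lpNorm (iteratedDerivWithin j u (Icc a b)) p (volume.restrict (Icc a b)) := by
  choose A hA using fun i : Fin j =>
    exists_norm_iteratedDerivWithin_left_le_lpNorm (E := E) hab.ne i.2 hp
  choose B hB using fun i : Fin j =>
    exists_norm_iteratedDerivWithin_left_le_lpNorm (E := E) hab.ne' i.2 hp
  simp only [uIcc_of_le hab.le, uIcc_of_ge hab.le] at hA hB
  obtain ⟨M, hM⟩ := Finite.exists_le fun i => A i + B i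
  refine ⟨max M 1, by positivity, fun u hu h hh => ?_⟩
  set N := lpNorm u p (volume.restrict (Icc a b)) +
    lpNorm (iteratedDerivWithin j u (Icc a b)) p (volume.restrict (Icc a b))
  have hN : 0 ≤ N := add_nonneg lpNorm_nonneg lpNorm_nonneg
  calc ‖iteratedDerivWithin h u (Icc a b) a‖ + ‖iteratedDerivWithin h u (Icc a b) b‖
      ≤ A ⟨h, hh⟩ * N + B ⟨h, hh⟩ * N := add_le_add (hA ⟨h, hh⟩ u hu) (hB ⟨h, hh⟩ u hu)
    _ = (A ⟨h, hh⟩ + B ⟨h, hh⟩) * N := (add_mul _ _ _).symm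
    _ ≤ max M 1 * N := by gcongr; exact (hM ⟨h, hh⟩).trans (le_max_left M 1)
    _ = _ := mul_add _ _ _

theorem trace_estimate_interval
    (j : ℕ) (hj : 1 ≤ j) (ℓ : ℝ) (hℓ : 0 < ℓ) :
    ∃ c₁ > (0:ℝ), ∃ c₂ > (0:ℝ), ∀ u : ℝ → ℂ, ContDiff ℝ j u →
      ∀ h : ℕ, h ≤ j - 1 →
        ‖iteratedDeriv h u 0‖ + ‖iteratedDeriv h u ℓ‖
          ≤ c₁ * (∫ y in (0:ℝ)..ℓ, ‖u y‖^2) ^ ((1:ℝ)/2)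
            + c₂ * (∫ y in (0:ℝ)..ℓ, ‖iteratedDeriv j u y‖^2) ^ ((1:ℝ)/2) := by
  obtain ⟨C, hC, hest⟩ := trace_estimate_interval_general (E := ℂ) j hℓ one_le_two
  refine ⟨C, hC, C, hC, fun u hu h hh => ?_⟩
  have hderiv (x) (hx : x ∈ Icc 0 ℓ) :=
    iteratedDerivWithin_eq_iteratedDeriv_of_contDiff hu
      (k := h) (mod_cast (by lia)) (uniqueDiffOn_Icc hℓ) hx
  have hnorm (k : ℕ) (hk : k ≤ j) :=
    lpNorm_iteratedDerivWithin_Icc_eq_intervalIntegral two_ne_zero ENNReal.ofNat_ne_top hℓ hu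
      (k := k) (mod_cast hk)
  have hnorm_zero := hnorm 0 j.zero_le
  simp only [iteratedDerivWithin_zero, iteratedDeriv_zero] at hnorm_zero
  simpa [hderiv, hℓ.le, hnorm_zero, hnorm j le_rfl] using hest u hu.contDiffOn h (by lia)
end
end
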